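/- arXiv:1111.6348 — 2 statements merged into one kernel-verified Lean document; each statement's English description precedes it below -/
import Mathlib

section
/- Let μ be a finite positive Borel measure on ℂ with compact infinite support, let t > 0, and let x ∈ ℂ satisfy |p_n(x;μ)|² / K_{n−1}(x,x;μ) → 0 as n → ∞. Define dν^x(z) = |z−x|² dμ(z). Then (z−x) p_{n−1}(z;ν^x) / p_n(z; μ + tδ_x) → 1 as n → ∞, uniformly on every compact subset of ℂ ∖ ch(μ). -/
/-!
Write `K = ∑_{j<n} |p_j(x)|²`, `k(z) = ∑_{j<n} conj(p_j(x)) p_j(z)` and `ε = |p_n(x)|² / K`.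
Both polynomials in the quotient are, up to a positive factor, perturbations of `p_n` by a multiple
of the kernel `k`:

* `√(1 + ε) (z - x) q_{n-1} = p_n - (p_n(x) / K) k` (`christoffel_formula`),
* `√(1 + η) r_n = p_n - (t p_n(x) / (1 + t K)) k` with `η = t |p_n(x)|² / (1 + t K) ≤ ε`
  (`uvarov_formula`).

Each holds because the right-hand side has the orthogonality and the leading coefficient that
characterise the left-hand side up to its norm (`IsONB.eq_smul`). Both coefficients of `k` are at
most `|p_n(x)| / K` in modulus, so it remains to see that `k / p_n` is `O(√K)` uniformly on compact
sets off the convex hull of the support; the quotient is then `1 + O(√ε)`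
(`norm_ratio_sub_one_le`).

That bound is `norm_eval_le`: for `deg P ≤ n` and `z` off the convex hull,
`|P(z)| ≤ C ‖P‖ |p_n(z)|`. Indeed `(p_n(z) P - P(z) p_n) / (w - z)` is a polynomial of degree less
than `n`, hence orthogonal to `p_n`, which gives
`p_n(z) ∫ conj(p_n) P / (w - z) dμ = P(z) ∫ |p_n|² / (w - z) dμ`.
The integral on the left is `O(‖P‖)`, and the one on the right is bounded below because a line
separates `z` from the support, so that `1 / (w - z)` stays in a half-plane away from `0`.
It is applied to `P = k`, whose norm is `√K`. No case distinction on the position of `x` is needed.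
-/

open MeasureTheory Filter Topology Polynomial

noncomputable section

/-- The closed support of a measure: the set of points all of whose neighborhoods
have positive measure. -/
def measSupport {α : Type*} [TopologicalSpace α] [MeasurableSpace α] (μ : Measure α) : Set α :=
  {x | ∀ U ∈ nhds x, μ U ≠ 0}

/-- `p` is the sequence of orthonormal polynomials for `μ`, with positive real leading
coefficients `κ`. -/
def OrthonormalPolys (μ : Measure ℂ) (p : ℕ → Polynomial ℂ) (κ : ℕ → ℝ) : Prop :=
  (∀ n, (p n).degree = n) ∧ (∀ n, 0 < κ n) ∧ (∀ n, (p n).leadingCoeff = (κ n : ℂ)) ∧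
  (∀ n m, ∫ z, (starRingEnd ℂ) ((p n).eval z) * (p m).eval z ∂μ
      = if n = m then 1 else 0)

/-! ### Orthonormal polynomials for a sesquilinear form -/

/-- Sesquilinear forms on `ℂ[X]`, conjugate-linear in the first argument. -/
abbrev SesqForm := ℂ[X] →ₗ⋆[ℂ] ℂ[X] →ₗ[ℂ] ℂ

/-- `p` is the sequence of orthonormal polynomials of `B`, with positive leading coefficients `κ`:
`OrthonormalPolys` with the integral replaced by an abstract form. -/
structure IsONB (B : SesqForm) (p : ℕ → ℂ[X]) (κ : ℕ → ℝ) : Prop where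
  deg : ∀ n, (p n).degree = n
  pos : ∀ n, 0 < κ n
  lead : ∀ n, (p n).leadingCoeff = (κ n : ℂ)
  orth : ∀ n m, B (p n) (p m) = if n = m then 1 else 0

lemma IsONB.coeff_self {B : SesqForm} {p κ} (h : IsONB B p κ) (n : ℕ) :
    (p n).coeff n = (κ n : ℂ) := by
  rw [← h.lead n, leadingCoeff, natDegree_eq_of_degree_eq_some (h.deg n)]

lemma exists_expansion {p : ℕ → ℂ[X]} (hd : ∀ n, (p n).degree = n) (n : ℕ) :
    ∀ P : ℂ[X], P.degree < n → ∃ c : ℕ → ℂ, P = ∑ j ∈ Finset.range n, c j • p j := by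
  induction n with
  | zero =>
    intro P hP
    refine ⟨0, ?_⟩
    simpa using hP
  | succ n ih =>
    intro P hP
    have hlc : (p n).coeff n ≠ 0 := coeff_ne_zero_of_eq_degree (hd n)
    obtain ⟨c, hc⟩ := ih (P - (P.coeff n / (p n).coeff n) • p n) (by
      rw [degree_lt_iff_coeff_zero]
      intro m hm
      rcases hm.eq_or_lt with rfl | hm
      · simp [hlc]
      · have h1 : P.coeff m = 0 := coeff_eq_zero_of_degree_lt (hP.trans_le (by exact_mod_cast hm))
        have h2 : (p n).coeff m = 0 := coeff_eq_zero_of_degree_lt (by rw [hd n]; exact_mod_cast hm)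
        simp [h1, h2])
    refine ⟨Function.update c n (P.coeff n / (p n).coeff n), ?_⟩
    rw [Finset.sum_range_succ, Function.update_self, Finset.sum_congr rfl (g := fun j => c j • p j),
      ← hc, sub_add_cancel]
    intro j hj
    rw [Function.update_of_ne (Finset.mem_range.mp hj).ne]

lemma IsONB.apply_eq_zero {B : SesqForm} {p κ} (h : IsONB B p κ) {n : ℕ} {f : ℂ[X]}
    (hf : f.degree < n) : B f (p n) = 0 := by
  obtain ⟨c, rfl⟩ := exists_expansion h.deg n f hf
  simp only [map_sum, LinearMap.sum_apply, map_smulₛₗ, LinearMap.smul_apply, h.orth]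
  refine Finset.sum_eq_zero fun j hj => ?_
  simp [(Finset.mem_range.mp hj).ne]

/-- Orthogonality to all lower degrees together with a positive leading coefficient determines a
polynomial up to its norm: it is `√(B T T)` times the orthonormal polynomial of its degree. -/
lemma IsONB.eq_smul {B : SesqForm} {p κ} (h : IsONB B p κ) {n : ℕ} {T : ℂ[X]}
    (hT : T.degree < (n + 1 : ℕ)) {a N : ℝ} (ha : 0 < a) (hcoeff : T.coeff n = (a : ℂ))
    (horth : ∀ f : ℂ[X], f.degree < n → B f T = 0) (hN : B T T = (N : ℂ)) :
    T = ((√N : ℝ) : ℂ) • p n := by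
  obtain ⟨c, hc⟩ := exists_expansion h.deg (n + 1) T hT
  have hc0 : ∀ j < n, c j = 0 := by
    intro j hj
    have := horth (p j) (by rw [h.deg]; exact_mod_cast hj)
    rw [hc] at this
    simpa [h.orth, hj.le, hj.trans (Nat.lt_succ_self n)] using this
  have hT' : T = c n • p n := by
    rw [hc, Finset.sum_range_succ, Finset.sum_eq_zero, zero_add]
    intro j hj
    rw [hc0 j (Finset.mem_range.mp hj), zero_smul]
  have hk : c n = ((a / κ n : ℝ) : ℂ) := by
    have := hcoeff
    rw [hT', coeff_smul, h.coeff_self, smul_eq_mul] at this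
    have hne : (κ n : ℂ) ≠ 0 := by exact_mod_cast (h.pos n).ne'
    push_cast
    rw [eq_div_iff hne, this]
  have hN' : N = (a / κ n) ^ 2 := by
    have := hN
    rw [hT', hk] at this
    simp only [map_smulₛₗ, LinearMap.smul_apply, h.orth, if_true, smul_eq_mul, mul_one,
      Complex.conj_ofReal, RingHom.id_apply] at this
    have h2 : ((a / κ n : ℝ) : ℂ) * ((a / κ n : ℝ) : ℂ) = (N : ℂ) := by simpa using this
    have h3 : (a / κ n) * (a / κ n) = N := by exact_mod_cast h2
    rw [← h3, sq]
  rw [hN', Real.sqrt_sq (div_pos ha (h.pos n)).le, ← hk]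
  exact hT'

/-! ### The Christoffel and Uvarov transforms -/

/-- The reproducing kernel `∑_{j<n} conj(p_j(x)) p_j(z)` as a polynomial in `z`, that is
`K_{n-1}(z, x)`; it is `0` for `n = 0`. -/
def cdKernel (p : ℕ → ℂ[X]) (n : ℕ) (x : ℂ) : ℂ[X] :=
  ∑ j ∈ Finset.range n, (starRingEnd ℂ) ((p j).eval x) • p j

/-- The diagonal value `K_{n-1}(x, x) = ∑_{j<n} |p_j(x)|²`. -/
def cdDiag (p : ℕ → ℂ[X]) (n : ℕ) (x : ℂ) : ℝ := ∑ j ∈ Finset.range n, ‖(p j).eval x‖ ^ 2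

lemma IsONB.degree_cdKernel {B : SesqForm} {p κ} (h : IsONB B p κ) (n : ℕ) (x : ℂ) :
    (cdKernel p n x).degree < n := by
  refine mem_degreeLT.mp (Submodule.sum_mem _ fun j hj => Submodule.smul_mem _ _ ?_)
  rw [mem_degreeLT, h.deg]
  exact_mod_cast Finset.mem_range.mp hj

lemma eval_cdKernel_self (p : ℕ → ℂ[X]) (n : ℕ) (x : ℂ) :
    (cdKernel p n x).eval x = (cdDiag p n x : ℂ) := by
  simp [cdKernel, cdDiag, eval_finsetSum, Complex.conj_mul']

lemma IsONB.apply_cdKernel {B : SesqForm} {p κ} (h : IsONB B p κ) {n : ℕ} (x : ℂ) {f : ℂ[X]}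
    (hf : f.degree < n) : B f (cdKernel p n x) = (starRingEnd ℂ) (f.eval x) := by
  obtain ⟨c, rfl⟩ := exists_expansion h.deg n f hf
  simp only [cdKernel, map_sum, LinearMap.sum_apply, map_smulₛₗ, LinearMap.smul_apply, h.orth,
    eval_finsetSum, eval_smul, smul_eq_mul, map_mul, mul_ite, mul_one, mul_zero,
    RingHom.id_apply]
  refine Finset.sum_congr rfl fun j hj => ?_
  simp [Finset.mem_range.mp hj, mul_comm]

lemma IsONB.apply_self_cdKernel {B : SesqForm} {p κ} (h : IsONB B p κ) (n : ℕ) (x : ℂ) :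
    B (p n) (cdKernel p n x) = 0 := by
  simp only [cdKernel, map_sum, map_smulₛₗ, h.orth]
  refine Finset.sum_eq_zero fun j hj => ?_
  simp [(Finset.mem_range.mp hj).ne']

lemma IsONB.cdDiag_pos {B : SesqForm} {p κ} (h : IsONB B p κ) {n : ℕ} (hn : 0 < n) (x : ℂ) :
    0 < cdDiag p n x := by
  refine Finset.sum_pos' (fun _ _ => by positivity) ⟨0, Finset.mem_range.mpr hn, ?_⟩
  have h0 : (p 0).degree = 0 := by simpa using h.deg 0
  have hc : (p 0).coeff 0 ≠ 0 := by
    rw [h.coeff_self]; exact_mod_cast (h.pos 0).ne'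
  have he : (p 0).eval x = (p 0).coeff 0 := by
    conv_lhs => rw [eq_C_of_degree_eq_zero h0, eval_C]
  rw [he]
  positivity

lemma IsONB.perturb_degree_coeff {B : SesqForm} {p κ} (h : IsONB B p κ) (n : ℕ) (x c : ℂ) :
    (p n - c • cdKernel p n x).degree < (n + 1 : ℕ) ∧
    (p n - c • cdKernel p n x).coeff n = (κ n : ℂ) := by
  have hk := h.degree_cdKernel n x
  constructor
  · refine (degree_sub_le _ _).trans_lt (max_lt ?_ ?_)
    · rw [h.deg]; exact_mod_cast Nat.lt_succ_self n
    · refine (degree_smul_le _ _).trans_lt (hk.trans ?_)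
      exact_mod_cast Nat.lt_succ_self n
  · rw [coeff_sub, coeff_smul, coeff_eq_zero_of_degree_lt hk, h.coeff_self]
    simp

/-- The orthonormal polynomials after adding the point mass `t δ_x`. -/
lemma uvarov_formula {B B₂ : SesqForm} {p r : ℕ → ℂ[X]} {κ κ'' : ℕ → ℝ} (h : IsONB B p κ)
    (h₂ : IsONB B₂ r κ'') {x : ℂ} {t : ℝ} (ht : 0 < t)
    (hB : ∀ P Q : ℂ[X], B₂ P Q = B P Q + t * ((starRingEnd ℂ) (P.eval x) * Q.eval x))
    {n : ℕ} (hn : 0 < n) :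
    p n - ((t : ℂ) * (p n).eval x / (1 + t * cdDiag p n x)) • cdKernel p n x
      = ((√(1 + t * ‖(p n).eval x‖ ^ 2 / (1 + t * cdDiag p n x)) : ℝ) : ℂ) • r n := by
  have hK := h.cdDiag_pos hn x
  have hne : (1 + t * cdDiag p n x : ℂ) ≠ 0 := by
    have : (1 + t * cdDiag p n x : ℝ) ≠ 0 := by positivity
    exact_mod_cast this
  obtain ⟨hd, hcf⟩ := h.perturb_degree_coeff n x ((t : ℂ) * (p n).eval x / (1 + t * cdDiag p n x))
  have ho : ∀ f : ℂ[X], f.degree < n →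
      B₂ f (p n - ((t : ℂ) * (p n).eval x / (1 + t * cdDiag p n x)) • cdKernel p n x) = 0 := by
    intro f hf
    rw [hB, map_sub, map_smul, h.apply_eq_zero hf, h.apply_cdKernel x hf, eval_sub, eval_smul,
      eval_cdKernel_self, smul_eq_mul, smul_eq_mul]
    field_simp
    ring
  refine h₂.eq_smul hd (h.pos n) hcf ho ?_
  rw [map_sub B₂, LinearMap.sub_apply, map_smulₛₗ B₂, LinearMap.smul_apply,
    ho _ (h.degree_cdKernel n x), smul_zero, sub_zero, hB, map_sub, map_smul,
    h.apply_self_cdKernel, h.orth, if_pos rfl, eval_sub, eval_smul, eval_cdKernel_self]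
  push_cast
  rw [← Complex.conj_mul', smul_eq_mul, smul_eq_mul]
  field_simp
  ring

/-- The orthonormal polynomials after multiplying the measure by `|z - x|²`: up to the factor
`z - x`, they are `p_{m+1}` minus the multiple of the kernel making the difference vanish at `x`. -/
lemma christoffel_formula {B B₁ : SesqForm} {p q : ℕ → ℂ[X]} {κ κ' : ℕ → ℝ} (h : IsONB B p κ)
    (h₁ : IsONB B₁ q κ') {x : ℂ}
    (hB : ∀ P Q : ℂ[X], B₁ P Q = B ((X - C x) * P) ((X - C x) * Q))
    (m : ℕ) :
    p (m + 1) - ((p (m + 1)).eval x / cdDiag p (m + 1) x) • cdKernel p (m + 1) x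
      = ((√(1 + ‖(p (m + 1)).eval x‖ ^ 2 / cdDiag p (m + 1) x) : ℝ) : ℂ) •
        ((X - C x) * q m) := by
  have hK := h.cdDiag_pos (Nat.succ_pos m) x
  have hne : (cdDiag p (m + 1) x : ℂ) ≠ 0 := by exact_mod_cast hK.ne'
  obtain ⟨hd, hcf⟩ := h.perturb_degree_coeff (m + 1) x
    ((p (m + 1)).eval x / cdDiag p (m + 1) x)
  set R := p (m + 1) - ((p (m + 1)).eval x / cdDiag p (m + 1) x) • cdKernel p (m + 1) x with hR
  have hroot : R.IsRoot x := by
    rw [IsRoot, hR, eval_sub, eval_smul, eval_cdKernel_self, smul_eq_mul, div_mul_cancel₀ _ hne,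
      sub_self]
  obtain ⟨T, hT⟩ := dvd_iff_isRoot.mpr hroot
  have hBR : ∀ f : ℂ[X], f.degree < (m + 1 : ℕ) →
      B f R = - ((p (m + 1)).eval x / cdDiag p (m + 1) x) * (starRingEnd ℂ) (f.eval x) := by
    intro f hf
    rw [hR, map_sub, map_smul, h.apply_eq_zero hf, h.apply_cdKernel x hf, smul_eq_mul]
    ring
  have hTd : T.degree < (m + 1 : ℕ) := by
    by_contra hcon
    push Not at hcon
    rw [hT, degree_mul, degree_X_sub_C] at hd
    have : (1 : WithBot ℕ) + (m + 1 : ℕ) ≤ 1 + T.degree := by gcongr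
    have h3 := this.trans_lt hd
    have h4 : ((1 + (m + 1) : ℕ) : WithBot ℕ) < ((m + 1 + 1 : ℕ) : WithBot ℕ) := by
      exact_mod_cast h3
    have h5 : 1 + (m + 1) < m + 1 + 1 := by exact_mod_cast h4
    omega
  have hTc : T.coeff m = (κ (m + 1) : ℂ) := by
    rw [← hcf, hT, sub_mul, coeff_sub, coeff_X_mul, coeff_C_mul,
      coeff_eq_zero_of_degree_lt hTd, mul_zero, sub_zero]
  have key := h₁.eq_smul (n := m) (T := T) hTd (h.pos (m + 1)) hTc
    (N := 1 + ‖(p (m + 1)).eval x‖ ^ 2 / cdDiag p (m + 1) x) ?_ ?_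
  · rw [hT]
    conv_lhs => rw [key]
    rw [mul_smul_comm]
  · intro f hf
    rw [hB, ← hT, hBR _ ?_]
    · simp
    · rw [degree_mul, degree_X_sub_C, Nat.cast_add, Nat.cast_one, add_comm]
      exact WithBot.add_lt_add_right (by simp) hf
  · rw [hB, ← hT]
    conv_lhs => rw [hR]
    rw [← hR, map_sub B, LinearMap.sub_apply, map_smulₛₗ B, LinearMap.smul_apply,
      hBR _ (h.degree_cdKernel _ x), eval_cdKernel_self, hR, map_sub, map_smul,
      h.apply_self_cdKernel, h.orth, if_pos rfl]
    push_cast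
    rw [← Complex.conj_mul']
    simp only [smul_eq_mul, map_div₀, Complex.conj_ofReal]
    field_simp
    ring

/-! ### The forms attached to the measures -/

lemma measSupport_eq_support (μ : Measure ℂ) : measSupport μ = μ.support := by
  ext x
  simp [measSupport, Measure.mem_support_iff_forall, pos_iff_ne_zero]

lemma integrable_of_continuousOn {μ : Measure ℂ} [IsFiniteMeasure μ]
    (hc : IsCompact (measSupport μ)) {f : ℂ → ℂ} (hf : ContinuousOn f (measSupport μ)) :
    Integrable f μ := by
  have h1 : IntegrableOn f (measSupport μ) μ := hf.integrableOn_compact hc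
  rwa [IntegrableOn, Measure.restrict_eq_self_of_ae_mem] at h1
  rw [measSupport_eq_support]
  exact Measure.support_mem_ae

lemma integrable_poly {μ : Measure ℂ} [IsFiniteMeasure μ]
    (hc : IsCompact (measSupport μ)) (P Q : ℂ[X]) :
    Integrable (fun z => (starRingEnd ℂ) (P.eval z) * Q.eval z) μ :=
  integrable_of_continuousOn hc (by fun_prop)

/-- The `L²(μ)` form `∫ conj(P) Q dμ`; compactness of the support makes it sesquilinear. -/
def intForm (μ : Measure ℂ) [IsFiniteMeasure μ] (hc : IsCompact (measSupport μ)) : SesqForm :=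
  LinearMap.mk₂'ₛₗ _ _ (fun P Q => ∫ z, (starRingEnd ℂ) (P.eval z) * Q.eval z ∂μ)
    (fun P P' Q => by
      simp only [eval_add, map_add, add_mul]
      exact integral_add (integrable_poly hc _ _) (integrable_poly hc _ _))
    (fun c P Q => by
      simp only [eval_smul, smul_eq_mul, map_mul, mul_assoc]
      exact integral_const_mul _ _)
    (fun P Q Q' => by
      simp only [eval_add, mul_add]
      exact integral_add (integrable_poly hc _ _) (integrable_poly hc _ _))
    (fun c P Q => by
      simp only [eval_smul, smul_eq_mul, mul_left_comm _ c, RingHom.id_apply]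
      exact integral_const_mul _ _)

lemma intForm_apply (μ : Measure ℂ) [IsFiniteMeasure μ] (hc : IsCompact (measSupport μ))
    (P Q : ℂ[X]) :
    intForm μ hc P Q = ∫ z, (starRingEnd ℂ) (P.eval z) * Q.eval z ∂μ := rfl

/-- The form of the measure `|z - x|² dμ` when `B` is the form of `μ`. -/
def christoffelForm (B : SesqForm) (x : ℂ) : SesqForm :=
  LinearMap.mk₂'ₛₗ _ _ (fun P Q => B ((X - C x) * P) ((X - C x) * Q))
    (fun P P' Q => by simp only [mul_add, map_add, LinearMap.add_apply])
    (fun c P Q => by simp only [mul_smul_comm, map_smulₛₗ, LinearMap.smul_apply])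
    (fun P Q Q' => by simp only [mul_add, map_add])
    (fun c P Q => by simp only [mul_smul_comm, map_smulₛₗ])

/-- The form of the measure `μ + t δ_x` when `B` is the form of `μ`. -/
def uvarovForm (B : SesqForm) (x : ℂ) (t : ℝ) : SesqForm :=
  LinearMap.mk₂'ₛₗ _ _ (fun P Q => B P Q + t * ((starRingEnd ℂ) (P.eval x) * Q.eval x))
    (fun P P' Q => by simp; ring)
    (fun c P Q => by simp; ring)
    (fun P Q Q' => by simp; ring)
    (fun c P Q => by simp; ring)

lemma intForm_self (μ : Measure ℂ) [IsFiniteMeasure μ] (hc : IsCompact (measSupport μ))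
    (P : ℂ[X]) :
    intForm μ hc P P = ((∫ z, ‖P.eval z‖ ^ 2 ∂μ : ℝ) : ℂ) := by
  rw [intForm_apply, ← integral_complex_ofReal]
  simp [Complex.conj_mul']

lemma integral_christoffel (μ : Measure ℂ) [IsFiniteMeasure μ] (hc : IsCompact (measSupport μ))
    (x : ℂ) (P Q : ℂ[X]) :
    ∫ z, (starRingEnd ℂ) (P.eval z) * Q.eval z
      ∂(μ.withDensity fun z => ENNReal.ofReal (‖z - x‖ ^ 2))
      = christoffelForm (intForm μ hc) x P Q := by
  rw [integral_withDensity_eq_integral_toReal_smul (by fun_prop) (by simp)]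
  change _ = intForm μ hc ((X - C x) * P) ((X - C x) * Q)
  rw [intForm_apply]
  congr 1 with z
  rw [ENNReal.toReal_ofReal (by positivity), Complex.real_smul]
  simp only [eval_mul, eval_sub, eval_X, eval_C, map_mul]
  push_cast
  rw [← Complex.conj_mul']
  ring

lemma integral_uvarov (μ : Measure ℂ) [IsFiniteMeasure μ] (hc : IsCompact (measSupport μ))
    (x : ℂ) {t : ℝ} (ht : 0 < t) (P Q : ℂ[X]) :
    ∫ z, (starRingEnd ℂ) (P.eval z) * Q.eval z ∂(μ + ENNReal.ofReal t • Measure.dirac x)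
      = uvarovForm (intForm μ hc) x t P Q := by
  rw [integral_add_measure (integrable_poly hc P Q)
    ((integrable_dirac enorm_lt_top).smul_measure (by simp)), integral_smul_measure,
    integral_dirac, ENNReal.toReal_ofReal ht.le, Complex.real_smul]
  rfl

/-! ### Growth off the convex hull of the support -/

/-- For `deg P ≤ n` and `z` separated from the support, `|P(z)|` is at most a constant times
`‖P‖ |p_n(z)|`, where `N = ‖P‖` in `L²(μ)`. The vector `u` encodes the separation: it points from
`z` to a supporting line of the convex hull, and `hu` says that the support lies beyond that line. -/
lemma norm_eval_le {μ : Measure ℂ} [IsFiniteMeasure μ] (hc : IsCompact (measSupport μ))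
    {p : ℕ → ℂ[X]} {κ : ℕ → ℝ} (h : IsONB (intForm μ hc) p κ) {z u : ℂ} {d D : ℝ}
    (hd : 0 < d) (hD : 0 < D) (hdu : d ≤ ‖u‖)
    (hu : ∀ w ∈ measSupport μ, ‖u‖ ^ 2 ≤ (u * (starRingEnd ℂ) (w - z)).re)
    (hw : ∀ w ∈ measSupport μ, ‖w - z‖ ≤ D)
    {n : ℕ} {P : ℂ[X]} (hP : P.degree < (n + 1 : ℕ)) {N : ℝ} (hN : 0 < N)
    (hPN : intForm μ hc P P = ((N ^ 2 : ℝ) : ℂ)) :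
    ‖P.eval z‖ ≤ (D / d) ^ 2 * N * ‖(p n).eval z‖ := by
  have hup : 0 < ‖u‖ := hd.trans_le hdu
  have hae : ∀ᵐ w ∂μ, w ∈ measSupport μ := by
    rw [measSupport_eq_support]; exact Measure.support_mem_ae
  have hlow : ∀ w ∈ measSupport μ, ‖u‖ ≤ ‖w - z‖ := by
    intro w hwS
    have h1 := (hu w hwS).trans (Complex.re_le_norm _)
    rw [norm_mul, RCLike.norm_conj, sq] at h1
    exact le_of_mul_le_mul_left h1 hup
  have hne : ∀ w ∈ measSupport μ, w - z ≠ 0 := fun w hwS =>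
    norm_pos_iff.mp (hup.trans_le (hlow w hwS))
  have hint : ∀ Q : ℂ[X], Integrable
      (fun w => (starRingEnd ℂ) ((p n).eval w) * Q.eval w / (w - z)) μ := fun Q =>
    integrable_of_continuousOn hc (ContinuousOn.div (by fun_prop) (by fun_prop) hne)
  set J : ℂ[X] → ℂ := fun Q => ∫ w, (starRingEnd ℂ) ((p n).eval w) * Q.eval w / (w - z) ∂μ with hJ
  -- `p_n` is orthogonal to the polynomial `(p_n(z) P - P(z) p_n) / (X - z)` of degree `< n`.
  have hid : (p n).eval z * J P = P.eval z * J (p n) := by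
    set G : ℂ[X] := (p n).eval z • P - P.eval z • p n with hG
    have hroot : G.IsRoot z := by simp [IsRoot, hG, mul_comm]
    obtain ⟨T, hT⟩ := dvd_iff_isRoot.mpr hroot
    have hGd : G.degree < (n + 1 : ℕ) := by
      refine mem_degreeLT.mp (Submodule.sub_mem _ (Submodule.smul_mem _ _ (mem_degreeLT.mpr hP))
        (Submodule.smul_mem _ _ (mem_degreeLT.mpr ?_)))
      rw [h.deg]; exact_mod_cast Nat.lt_succ_self n
    have hTd : T.degree < n := by
      rw [hT, degree_mul, degree_X_sub_C, add_comm, Nat.cast_add, Nat.cast_one] at hGd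
      exact lt_of_add_lt_add_right hGd
    have horth : ∫ w, (starRingEnd ℂ) ((p n).eval w) * T.eval w ∂μ = 0 := by
      obtain ⟨c, hcT⟩ := exists_expansion h.deg n T hTd
      rw [← intForm_apply μ hc, hcT, map_sum]
      refine Finset.sum_eq_zero fun j hj => ?_
      rw [map_smul, h.orth, if_neg (Finset.mem_range.mp hj).ne', smul_zero]
    rw [← sub_eq_zero, hJ]
    simp only
    rw [← integral_const_mul, ← integral_const_mul,
      ← integral_sub ((hint P).const_mul _) ((hint (p n)).const_mul _), ← horth]
    refine integral_congr_ae (hae.mono fun w hwS => ?_)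
    have h2 : G.eval w = (w - z) * T.eval w := by rw [hT]; simp
    have h3 : G.eval w = (p n).eval z * P.eval w - P.eval z * (p n).eval w := by simp [hG]
    have h4 := hne w hwS
    simp only
    field_simp
    rw [h3] at h2
    linear_combination (starRingEnd ℂ) ((p n).eval w) * h2
  have hI : ∀ Q : ℂ[X], Integrable (fun w => ‖Q.eval w‖ ^ 2) μ := fun Q => by
    have h1 := (integrable_poly hc Q Q).norm
    simpa [sq] using h1
  have hpn : ∫ w, ‖(p n).eval w‖ ^ 2 ∂μ = 1 := by
    have h1 := intForm_self μ hc (p n)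
    rw [h.orth, if_pos rfl] at h1
    exact_mod_cast h1.symm
  have hPP : ∫ w, ‖P.eval w‖ ^ 2 ∂μ = N ^ 2 := by
    have h1 := intForm_self μ hc P
    rw [hPN] at h1
    exact_mod_cast h1.symm
  -- `Re (u / (w - z)) = Re (u conj(w - z)) / |w - z|² ≥ |u|² / D²` on the support.
  have hJlow : ‖u‖ / D ^ 2 ≤ ‖J (p n)‖ := by
    have h1 : ‖u‖ ^ 2 / D ^ 2 ≤ (u * J (p n)).re := by
      rw [hJ]
      simp only
      rw [← integral_const_mul]
      have h2 := integral_re (𝕜 := ℂ) ((hint (p n)).const_mul u)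
      simp only [RCLike.re_eq_complex_re] at h2
      rw [← h2]
      calc ‖u‖ ^ 2 / D ^ 2 = ∫ w, ‖u‖ ^ 2 / D ^ 2 * ‖(p n).eval w‖ ^ 2 ∂μ := by
            rw [integral_const_mul, hpn, mul_one]
        _ ≤ _ := by
            refine integral_mono_ae ((hI _).const_mul _) ((hint (p n)).const_mul u).re
              (hae.mono fun w hwS => ?_)
            have h4 := hne w hwS
            have h5 : 0 < ‖w - z‖ := norm_pos_iff.mpr h4
            have h6 : u * ((starRingEnd ℂ) ((p n).eval w) * (p n).eval w / (w - z))
                = ((‖(p n).eval w‖ ^ 2 / ‖w - z‖ ^ 2 : ℝ) : ℂ) *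
                  (u * (starRingEnd ℂ) (w - z)) := by
              push_cast
              rw [← Complex.conj_mul', ← Complex.conj_mul']
              have : (starRingEnd ℂ) (w - z) ≠ 0 :=
                (_root_.map_ne_zero _).mpr h4
              field_simp
            simp only
            rw [h6, Complex.re_ofReal_mul]
            calc ‖u‖ ^ 2 / D ^ 2 * ‖(p n).eval w‖ ^ 2
                ≤ ‖u‖ ^ 2 / ‖w - z‖ ^ 2 * ‖(p n).eval w‖ ^ 2 := by
                  gcongr
                  exact hw w hwS
              _ = ‖(p n).eval w‖ ^ 2 / ‖w - z‖ ^ 2 * ‖u‖ ^ 2 := by ring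
              _ ≤ _ := by gcongr; exact hu w hwS
    have h2 := h1.trans (Complex.re_le_norm _)
    rw [norm_mul, sq, mul_div_assoc] at h2
    exact le_of_mul_le_mul_left h2 hup
  -- Cauchy-Schwarz in the form `2 |p_n| |P| ≤ N |p_n|² + |P|² / N`, with `|w - z| ≥ |u|`.
  have hJup : ‖J P‖ ≤ N / ‖u‖ := by
    calc ‖J P‖ ≤ ∫ w, (N * ‖(p n).eval w‖ ^ 2 + ‖P.eval w‖ ^ 2 / N) / (2 * ‖u‖) ∂μ := by
          refine norm_integral_le_of_norm_le
            ((((hI _).const_mul _).add ((hI _).div_const _)).div_const _)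
            (hae.mono fun w hwS => ?_)
          rw [norm_div, norm_mul, RCLike.norm_conj]
          calc _ ≤ ‖(p n).eval w‖ * ‖P.eval w‖ / ‖u‖ := by
                gcongr
                exact hlow w hwS
            _ = 2 * (‖(p n).eval w‖ * ‖P.eval w‖) / (2 * ‖u‖) := by field_simp
            _ ≤ _ := by
                gcongr
                have : N * ‖(p n).eval w‖ ^ 2 + ‖P.eval w‖ ^ 2 / N
                    - 2 * (‖(p n).eval w‖ * ‖P.eval w‖)
                    = (N * ‖(p n).eval w‖ - ‖P.eval w‖) ^ 2 / N := by
                  field_simp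
                  ring
                have h3 : 0 ≤ (N * ‖(p n).eval w‖ - ‖P.eval w‖) ^ 2 / N := by positivity
                linarith
      _ = N / ‖u‖ := by
          rw [integral_div, integral_add ((hI _).const_mul _) ((hI _).div_const _),
            integral_const_mul, integral_div, hpn, hPP]
          field_simp
          ring
  have h1 : ‖(p n).eval z‖ * ‖J P‖ = ‖P.eval z‖ * ‖J (p n)‖ := by
    rw [← norm_mul, ← norm_mul, hid]
  have h2 : ‖P.eval z‖ * (‖u‖ / D ^ 2) ≤ ‖(p n).eval z‖ * (N / ‖u‖) :=
    calc _ ≤ ‖P.eval z‖ * ‖J (p n)‖ := by gcongr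
      _ = _ := h1.symm
      _ ≤ _ := by gcongr
  calc ‖P.eval z‖ = ‖P.eval z‖ * (‖u‖ / D ^ 2) * (D ^ 2 / ‖u‖) := by field_simp
    _ ≤ ‖(p n).eval z‖ * (N / ‖u‖) * (D ^ 2 / ‖u‖) := by gcongr
    _ = (D / ‖u‖) ^ 2 * N * ‖(p n).eval z‖ := by field_simp
    _ ≤ _ := by gcongr

/-- By Carathéodory, the convex hull is the image of a compact set of weights and triples of points
under a continuous map. Fewer than three points are padded with weight `0`. -/
lemma isCompact_convexHull_complex {S : Set ℂ} (hS : IsCompact S) (hne : S.Nonempty) :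
    IsCompact (convexHull ℝ S) := by
  have himage : convexHull ℝ S = Set.image
      (fun v : (Fin 3 → ℝ) × (Fin 3 → ℂ) => ∑ i, v.1 i • v.2 i)
      (stdSimplex ℝ (Fin 3) ×ˢ Set.univ.pi fun _ => S) := by
    ext y
    constructor
    · intro hy
      obtain ⟨ι, _, ζ, w, hζ, hind, hw, hw1, rfl⟩ := eq_pos_convex_span_of_mem_convexHull hy
      obtain ⟨s₀, hs₀⟩ := hne
      have hcard : Fintype.card ι ≤ Fintype.card (Fin 3) := by
        have h1 := hind.card_le_finrank_succ
        have h2 := Submodule.finrank_le (vectorSpan ℝ (Set.range ζ))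
        rw [Complex.finrank_real_complex] at h2
        rw [Fintype.card_fin]
        omega
      obtain ⟨e⟩ := Function.Embedding.nonempty_of_card_le hcard
      have hW : ∀ i ∉ Set.range e, Function.extend e w 0 i = 0 := fun i hi =>
        Function.extend_apply' _ _ _ hi
      refine ⟨(Function.extend e w 0, Function.extend e ζ fun _ => s₀), ⟨⟨fun i => ?_, ?_⟩,
        fun i _ => ?_⟩, ?_⟩
      · by_cases hi : i ∈ Set.range e
        · obtain ⟨j, rfl⟩ := hi
          simpa only [e.injective.extend_apply] using (hw j).le
        · exact (hW i hi).ge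
      · rw [← hw1]
        exact (Fintype.sum_of_injective e e.injective _ _ hW
          fun j => (e.injective.extend_apply _ _ j).symm).symm
      · by_cases hi : i ∈ Set.range e
        · obtain ⟨j, rfl⟩ := hi
          simpa only [e.injective.extend_apply] using hζ (Set.mem_range_self j)
        · simpa only [Function.extend_apply' _ _ _ hi] using hs₀
      · refine (Fintype.sum_of_injective e e.injective _ _ (fun i hi => ?_) fun j => ?_).symm
        · simp only [hW i hi, zero_smul]
        · simp only [e.injective.extend_apply]
    · rintro ⟨v, ⟨hv, hvS⟩, rfl⟩
      exact (convex_convexHull ℝ S).sum_mem (fun i _ => hv.1 i) hv.2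
        fun i _ => subset_convexHull ℝ S (hvS i trivial)
  rw [himage]
  exact ((isCompact_stdSimplex ℝ (Fin 3)).prod (isCompact_univ_pi fun _ => hS)).image
    (by fun_prop)

/-- The separation data required by `norm_eval_le`, uniformly over a compact set: `u = y - z` with
`y` the point of the convex hull nearest to `z`. -/
lemma exists_separation {S K : Set ℂ} (hS : IsCompact S) (hne : S.Nonempty) (hK : IsCompact K)
    (hKS : K ⊆ (convexHull ℝ S)ᶜ) :
    ∃ d > 0, ∃ D > 0, ∀ z ∈ K, ∃ u : ℂ, d ≤ ‖u‖ ∧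
      (∀ w ∈ S, ‖u‖ ^ 2 ≤ (u * (starRingEnd ℂ) (w - z)).re) ∧ ∀ w ∈ S, ‖w - z‖ ≤ D := by
  have hH : IsCompact (convexHull ℝ S) := isCompact_convexHull_complex hS hne
  have hdisj : Disjoint K (convexHull ℝ S) := Set.subset_compl_iff_disjoint_right.mp hKS
  obtain ⟨d, hd, hdd⟩ := hdisj.exists_thickenings hK hH.isClosed
  obtain ⟨R, hR⟩ := (hS.union hK).isBounded.exists_norm_le
  refine ⟨d, hd, |R| + |R| + 1, by positivity, fun z hz => ?_⟩
  obtain ⟨y, hy, hyz⟩ := exists_norm_eq_iInf_of_complete_convex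
    (convexHull_nonempty_iff.mpr hne) hH.isComplete (convex_convexHull ℝ S) z
  rw [norm_eq_iInf_iff_real_inner_le_zero (convex_convexHull ℝ S) hy] at hyz
  refine ⟨y - z, ?_, ?_, ?_⟩
  · by_contra hcon
    push Not at hcon
    exact Set.disjoint_left.mp hdd
      (Metric.mem_thickening_iff.mpr ⟨z, hz, by rwa [dist_eq_norm]⟩)
      (Metric.self_subset_thickening hd _ hy)
  · intro w hw
    have h1 := hyz w (subset_convexHull ℝ S hw)
    rw [Complex.inner] at h1
    have h2 : (y - z) * (starRingEnd ℂ) (w - z)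
      = (y - z) * (starRingEnd ℂ) (y - z) + (y - z) * (starRingEnd ℂ) (w - y) := by
      simp only [map_sub]; ring
    rw [h2, Complex.mul_conj', Complex.add_re]
    have h3 : (((‖y - z‖ : ℂ)) ^ 2).re = ‖y - z‖ ^ 2 := by
      rw [← Complex.ofReal_pow, Complex.ofReal_re]
    rw [h3]
    simp only [map_sub, Complex.mul_re, Complex.sub_re, Complex.sub_im, Complex.conj_re,
      Complex.conj_im] at h1 ⊢
    linarith
  · intro w hw
    have h1 := hR w (Or.inl hw)
    have h2 := hR z (Or.inr hz)
    have := norm_sub_le w z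
    have := le_abs_self R
    linarith

/-! ### The ratio asymptotics -/

/-- The quotient `A / r` of two normalised perturbations `P - a k`, `P - c k` of `P` is close to `1`
when both perturbations are small relative to `P`. -/
lemma norm_ratio_sub_one_le {P k A r a c : ℂ} {ε η b : ℝ} (hP : P ≠ 0) (hη : 0 ≤ η) (hηε : η ≤ ε)
    (hA : P - a * k = ((√(1 + ε) : ℝ) : ℂ) * A) (hr : P - c * k = ((√(1 + η) : ℝ) : ℂ) * r)
    (ha : ‖a * k‖ ≤ b * ‖P‖) (hc : ‖c * k‖ ≤ b * ‖P‖) (hb : b ≤ 1 / 2) :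
    ‖A / r - 1‖ ≤ 2 * (ε + 2 * b) := by
  have hPn : 0 < ‖P‖ := norm_pos_iff.mpr hP
  have hs1 : 0 < √(1 + ε) := Real.sqrt_pos.mpr (by linarith)
  have hs2 : 0 < √(1 + η) := Real.sqrt_pos.mpr (by linarith)
  set s₁ := √(1 + ε) with hs₁
  set s₂ := √(1 + η) with hs₂
  have h12 : s₂ ≤ s₁ := Real.sqrt_le_sqrt (by linarith)
  have h2 : 1 ≤ s₂ := Real.one_le_sqrt.mpr (by linarith)
  have h1 : s₁ ≤ 1 + ε := by
    rw [hs₁, Real.sqrt_le_left (by linarith)]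
    nlinarith
  have hs : ‖((s₂ / s₁ : ℝ) : ℂ) - 1‖ ≤ ε := by
    rw [← Complex.ofReal_one, ← Complex.ofReal_sub, Complex.norm_real, Real.norm_eq_abs,
      abs_sub_comm, abs_of_nonneg (by rw [sub_nonneg, div_le_one hs1]; exact h12),
      sub_le_comm, le_div_iff₀ hs1]
    rcases le_or_gt 1 ε with h | h
    · nlinarith
    · nlinarith
  have hden : ‖P‖ / 2 ≤ ‖P - c * k‖ := by
    have := norm_sub_norm_le P (c * k)
    nlinarith
  have hden0 : P - c * k ≠ 0 := norm_pos_iff.mp (by linarith)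
  have hs1c : (s₁ : ℂ) ≠ 0 := by exact_mod_cast hs1.ne'
  have hs2c : (s₂ : ℂ) ≠ 0 := by exact_mod_cast hs2.ne'
  have hr0 : r ≠ 0 := by rintro rfl; exact hden0 (by rw [hr, mul_zero])
  have hq : A / r - 1 = ((((s₂ / s₁ : ℝ) : ℂ) - 1) * P - ((s₂ / s₁ : ℝ) : ℂ) * (a * k) + c * k)
      / (P - c * k) := by
    have hAr : A / r * (P - c * k) = s₂ / s₁ * (P - a * k) := by
      rw [hr, hA]
      field_simp
    rw [eq_div_iff hden0, sub_mul, hAr]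
    push_cast
    ring
  have hsle : ‖((s₂ / s₁ : ℝ) : ℂ)‖ ≤ 1 := by
    rw [Complex.norm_real, Real.norm_of_nonneg (by positivity), div_le_one hs1]
    exact h12
  have hb0 : 0 ≤ b * ‖P‖ := (norm_nonneg _).trans ha
  rw [hq, norm_div, div_le_iff₀ (by linarith)]
  calc _ ≤ ‖(((s₂ / s₁ : ℝ) : ℂ) - 1) * P‖ + ‖((s₂ / s₁ : ℝ) : ℂ) * (a * k)‖ + ‖c * k‖ :=
        (norm_add_le _ _).trans (by gcongr; exact norm_sub_le _ _)
    _ ≤ ε * ‖P‖ + 1 * (b * ‖P‖) + b * ‖P‖ := by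
        rw [norm_mul, norm_mul]
        gcongr
    _ = 2 * (ε + 2 * b) * (‖P‖ / 2) := by ring
    _ ≤ _ := by
        have : 0 ≤ b := nonneg_of_mul_nonneg_left hb0 hPn
        gcongr
        linarith

theorem christoffel_vs_uvarov_ratio_asymptotics
    (μ : Measure ℂ) [IsFiniteMeasure μ]
    (hc : IsCompact (measSupport μ)) (hi : (measSupport μ).Infinite)
    (x : ℂ) (t : ℝ) (ht : 0 < t)
    (p : ℕ → Polynomial ℂ) (κ : ℕ → ℝ) (hON : OrthonormalPolys μ p κ)
    (hx : Tendsto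
      (fun n => ‖(p n).eval x‖ ^ 2 / ∑ j ∈ Finset.range n, ‖(p j).eval x‖ ^ 2)
      atTop (𝓝 0))
    (q : ℕ → Polynomial ℂ) (κ' : ℕ → ℝ)
    (hON' : OrthonormalPolys
      (μ.withDensity fun z => ENNReal.ofReal (‖z - x‖ ^ 2)) q κ')
    (r : ℕ → Polynomial ℂ) (κ'' : ℕ → ℝ)
    (hON'' : OrthonormalPolys (μ + ENNReal.ofReal t • Measure.dirac x) r κ'') :
    ∀ K : Set ℂ, IsCompact K → K ⊆ (convexHull ℝ (measSupport μ))ᶜ →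
      TendstoUniformlyOn (fun n z => (z - x) * (q (n - 1)).eval z / (r n).eval z)
        (fun _ => (1 : ℂ)) atTop K := by
  have h : IsONB (intForm μ hc) p κ := ⟨hON.1, hON.2.1, hON.2.2.1, hON.2.2.2⟩
  have h₁ : IsONB (christoffelForm (intForm μ hc) x) q κ' := ⟨hON'.1, hON'.2.1, hON'.2.2.1,
    fun n m => by rw [← integral_christoffel]; exact hON'.2.2.2 n m⟩
  have h₂ : IsONB (uvarovForm (intForm μ hc) x t) r κ'' := ⟨hON''.1, hON''.2.1, hON''.2.2.1,
    fun n m => by rw [← integral_uvarov μ hc x ht]; exact hON''.2.2.2 n m⟩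
  intro K hK hKS
  obtain ⟨d, hd, D, hD, hsep⟩ := exists_separation hc hi.nonempty hK hKS
  set M : ℝ := (D / d) ^ 2 with hM
  set ε : ℕ → ℝ := fun n => ‖(p n).eval x‖ ^ 2 / cdDiag p n x with hε
  have hε0 : Tendsto ε atTop (𝓝 0) := hx
  have hb0 : Tendsto (fun n => M * √(ε n)) atTop (𝓝 0) := by
    simpa using hε0.sqrt.const_mul M
  have hfin : Tendsto (fun n => 2 * (ε n + 2 * (M * √(ε n)))) atTop (𝓝 0) := by
    simpa using (hε0.add (hb0.const_mul 2)).const_mul 2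
  rw [Metric.tendstoUniformlyOn_iff]
  intro e he
  filter_upwards [hfin.eventually_lt_const he,
    hb0.eventually_le_const (by norm_num : (0 : ℝ) < 1 / 2),
    eventually_ge_atTop 1] with n hn1 hn2 hn z hz
  obtain ⟨m, rfl⟩ : ∃ m, n = m + 1 := ⟨n - 1, by omega⟩
  obtain ⟨u, hdu, hu, hw⟩ := hsep z hz
  have hk0 := h.cdDiag_pos hn x
  set L := cdDiag p (m + 1) x with hL
  -- The constant `p_0` does not vanish, and `|p_0(z)|` is bounded by a multiple of `|p_n(z)|`.
  have hP : (p (m + 1)).eval z ≠ 0 := by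
    intro h0
    have hle := norm_eval_le hc h hd hD hdu hu hw (n := m + 1) (P := p 0) (N := 1)
      (by rw [h.deg]; exact_mod_cast Nat.succ_pos _) one_pos (by rw [h.orth]; simp)
    rw [h0, norm_zero, mul_zero] at hle
    have h00 := h.cdDiag_pos one_pos z
    simp only [cdDiag, Finset.sum_range_one] at h00
    have := norm_nonneg ((p 0).eval z)
    nlinarith
  have hker : ‖(cdKernel p (m + 1) x).eval z‖ ≤ M * √L * ‖(p (m + 1)).eval z‖ := by
    have hkd := h.degree_cdKernel (m + 1) x
    refine norm_eval_le hc h hd hD hdu hu hw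
      (hkd.trans (by exact_mod_cast Nat.lt_succ_self _)) (Real.sqrt_pos.mpr hk0) ?_
    rw [h.apply_cdKernel x hkd, eval_cdKernel_self, Complex.conj_ofReal, Real.sq_sqrt hk0.le]
  have hsq : ‖(p (m + 1)).eval x‖ / L * √L = √(ε (m + 1)) := by
    rw [hε]
    simp only
    rw [Real.sqrt_div (by positivity), Real.sqrt_sq (norm_nonneg _), ← hL]
    nth_rw 1 [← Real.sq_sqrt hk0.le]
    have := Real.sqrt_pos.mpr hk0
    field_simp
  have hbound : ∀ a : ℂ, ‖a‖ ≤ ‖(p (m + 1)).eval x‖ / L →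
      ‖a * (cdKernel p (m + 1) x).eval z‖ ≤ M * √(ε (m + 1)) * ‖(p (m + 1)).eval z‖ := by
    intro a ha
    rw [norm_mul, ← hsq]
    calc _ ≤ ‖(p (m + 1)).eval x‖ / L * (M * √L * ‖(p (m + 1)).eval z‖) := by gcongr
      _ = _ := by ring
  have hden : L * t ≤ 1 + t * L := by linarith [mul_comm L t]
  have e₁ := congrArg (eval z) (christoffel_formula h h₁ (fun _ _ => rfl) m)
  have e₂ := congrArg (eval z) (uvarov_formula h h₂ ht (fun _ _ => rfl) hn)
  simp only [eval_sub, eval_smul, eval_mul, eval_X, eval_C, smul_eq_mul] at e₁ e₂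
  rw [dist_comm, dist_eq_norm, Nat.add_sub_cancel]
  refine (norm_ratio_sub_one_le hP ?_ ?_ e₁ e₂ (hbound _ ?_) (hbound _ ?_) hn2).trans_lt hn1
  · positivity
  · rw [div_le_div_iff₀ (by positivity) hk0]
    have : 0 ≤ ‖(p (m + 1)).eval x‖ ^ 2 := by positivity
    nlinarith
  · rw [norm_div, Complex.norm_real, Real.norm_of_nonneg hk0.le]
  · have hcast : (1 + t * L : ℂ) = ((1 + t * L : ℝ) : ℂ) := by push_cast; rfl
    rw [hcast, norm_div, norm_mul, Complex.norm_real, Complex.norm_real,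
      Real.norm_of_nonneg ht.le, Real.norm_of_nonneg (by positivity),
      div_le_div_iff₀ (by positivity) hk0]
    have := norm_nonneg ((p (m + 1)).eval x)
    nlinarith
end
end

section
/- Let μ be a finite positive Borel measure on ℂ with compact infinite support and let x ∈ ℂ with x ∉ ch(μ). Then it is NOT the case that |p_n(x;μ)|² / K_{n−1}(x,x;μ) → 0 as n → ∞. -/
open MeasureTheory Filter Topology Polynomial

noncomputable section

/-!
Let `F(z) = ∑_{j<n} conj (p_j(x)) p_j(z)` be the kernel `K_{n-1}(z, x)` and let
`K = ∑_{j<n} |p_j(x)|² = ‖F‖²`. The polynomial `(z - x) F` has degree at most `n` and vanishes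
at `x`, so the reproducing property of `K_n` (`ip_kernelPoly`) makes it orthogonal to
`F + conj (p_n(x)) p_n`. Hence `∫ (z - x) |F|² dμ = -p_n(x) ⟨p_n, (z - x) F⟩`, whose modulus is at
most `C |p_n(x)| √K`, where `C` bounds `|z - x|` on the support.

On the other hand, `x` is strictly separated from the convex hull of the support by a real linear
functional `f`, with `f (z - x) ≥ δ > 0` on the support; applying `f` to `∫ (z - x) |F|² dμ`
gives at least `δ K`. Therefore `δ √K ≤ ‖f‖ C |p_n(x)|`, which keeps `|p_n(x)|² / K` away
from zero.
-/

/-! ### Measures with compact support -/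

lemma ae_mem_measSupport (μ : Measure ℂ) : ∀ᵐ z ∂μ, z ∈ measSupport μ := by
  rw [ae_iff]
  refine measure_null_of_locally_null _ fun z hz => ?_
  simp only [measSupport, Set.mem_ofPred_eq, not_forall, not_not] at hz
  obtain ⟨U, hU, h0⟩ := hz
  exact ⟨U, mem_nhdsWithin_of_mem_nhds hU, h0⟩

lemma integrable_of_continuous {E : Type*} [NormedAddCommGroup E]
    {μ : Measure ℂ} [IsFiniteMeasure μ] (hc : IsCompact (measSupport μ))
    {g : ℂ → E} (hg : Continuous g) : Integrable g μ := by
  have h := hg.continuousOn.integrableOn_compact (μ := μ) hc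
  rwa [IntegrableOn, Measure.restrict_eq_self_of_ae_mem (ae_mem_measSupport μ)] at h

/-! ### The inner product on polynomials -/

/-- The `L²(μ)` inner product of two polynomials, conjugate-linear in the first argument. -/
def ip (μ : Measure ℂ) (f g : ℂ[X]) : ℂ :=
  ∫ z, (starRingEnd ℂ) (f.eval z) * g.eval z ∂μ

section ip

variable {μ : Measure ℂ}

lemma integrable_ip [IsFiniteMeasure μ] (hc : IsCompact (measSupport μ)) (f g : ℂ[X]) :
    Integrable (fun z => (starRingEnd ℂ) (f.eval z) * g.eval z) μ :=
  integrable_of_continuous hc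
    ((Complex.continuous_conj.comp f.continuous).mul g.continuous)

lemma ip_add_left [IsFiniteMeasure μ] (hc : IsCompact (measSupport μ)) (f g h : ℂ[X]) :
    ip μ (f + g) h = ip μ f h + ip μ g h := by
  simp only [ip, eval_add, map_add, add_mul]
  exact integral_add (integrable_ip hc f h) (integrable_ip hc g h)

lemma ip_C_mul_left (a : ℂ) (f g : ℂ[X]) :
    ip μ (C a * f) g = (starRingEnd ℂ) a * ip μ f g := by
  simp only [ip, eval_mul, eval_C, map_mul, mul_assoc]
  exact integral_const_mul _ _

lemma ip_C_mul_right (a : ℂ) (f g : ℂ[X]) : ip μ f (C a * g) = a * ip μ f g := by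
  simp only [ip, eval_mul, eval_C, mul_left_comm _ a]
  exact integral_const_mul _ _

lemma ip_sum_left [IsFiniteMeasure μ]
    (hc : IsCompact (measSupport μ)) (s : Finset ℕ) (f : ℕ → ℂ[X]) (g : ℂ[X]) :
    ip μ (∑ j ∈ s, f j) g = ∑ j ∈ s, ip μ (f j) g := by
  simp only [ip, eval_finsetSum, map_sum, Finset.sum_mul]
  exact integral_finsetSum _ fun j _ => integrable_ip hc (f j) g

lemma ip_sum_right [IsFiniteMeasure μ]
    (hc : IsCompact (measSupport μ)) (s : Finset ℕ) (f : ℂ[X]) (g : ℕ → ℂ[X]) :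
    ip μ f (∑ j ∈ s, g j) = ∑ j ∈ s, ip μ f (g j) := by
  simp only [ip, eval_finsetSum, Finset.mul_sum]
  exact integral_finsetSum _ fun j _ => integrable_ip hc f (g j)

end ip

lemma ip_self (μ : Measure ℂ) (f : ℂ[X]) : ip μ f f = ((∫ z, ‖f.eval z‖ ^ 2 ∂μ : ℝ) : ℂ) := by
  rw [ip, ← integral_complex_ofReal]
  congr 1
  ext z
  rw [Complex.conj_mul']
  push_cast
  rfl

/-! ### The Christoffel–Darboux kernel -/

/-- A sequence with one polynomial of each degree spans: every polynomial of degree less than `n`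
is a combination of the first `n` terms. -/
lemma exists_eq_sum {p : ℕ → ℂ[X]} (hdeg : ∀ n, (p n).degree = n) (n : ℕ) :
    ∀ q : ℂ[X], q.degree < n → ∃ c : ℕ → ℂ, q = ∑ j ∈ Finset.range n, C (c j) * p j := by
  induction n with
  | zero =>
    intro q hq
    refine ⟨0, ?_⟩
    simpa [Nat.WithBot.lt_zero_iff] using hq
  | succ n ih =>
    intro q hq
    have hlead : (p n).coeff n ≠ 0 := coeff_ne_zero_of_eq_degree (hdeg n)
    -- Subtracting a multiple of `p n` cancels the coefficient of degree `n`.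
    set a : ℂ := q.coeff n / (p n).coeff n with ha
    have hr : (q - C a * p n).degree < n := by
      rw [degree_lt_iff_coeff_zero]
      intro m hm
      rcases hm.eq_or_lt with rfl | hm
      · simp [ha, hlead]
      · have h1 : q.coeff m = 0 := (degree_lt_iff_coeff_zero q (n + 1)).1 hq m hm
        have h2 : (p n).coeff m = 0 :=
          coeff_eq_zero_of_degree_lt (by rw [hdeg]; exact_mod_cast hm)
        simp [h1, h2]
    obtain ⟨c, hcq⟩ := ih _ hr
    refine ⟨Function.update c n a, ?_⟩
    rw [Finset.sum_range_succ, Function.update_self]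
    have : ∑ j ∈ Finset.range n, C (Function.update c n a j) * p j
        = ∑ j ∈ Finset.range n, C (c j) * p j :=
      Finset.sum_congr rfl fun j hj => by
        rw [Function.update_of_ne (Finset.mem_range.1 hj).ne]
    rw [this, ← hcq]
    ring

/-- The Christoffel–Darboux kernel `z ↦ K_{n-1}(z, x) = ∑_{j<n} conj (p_j(x)) p_j(z)`, as a
polynomial in `z`. -/
def kernelPoly (p : ℕ → ℂ[X]) (x : ℂ) (n : ℕ) : ℂ[X] :=
  ∑ j ∈ Finset.range n, C ((starRingEnd ℂ) ((p j).eval x)) * p j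

section kernel

variable {μ : Measure ℂ} {p : ℕ → ℂ[X]} {κ : ℕ → ℝ}

/-- Reproducing property of the kernel on polynomials of degree less than `n`. -/
lemma ip_kernelPoly [IsFiniteMeasure μ]
    (hc : IsCompact (measSupport μ)) (hON : OrthonormalPolys μ p κ) (x : ℂ)
    (n : ℕ) (q : ℂ[X]) (hq : q.degree < n) : ip μ (kernelPoly p x n) q = q.eval x := by
  have hip : ∀ i j, ip μ (p i) (p j) = if i = j then 1 else 0 := hON.2.2.2
  obtain ⟨c, rfl⟩ := exists_eq_sum hON.1 n q hq
  rw [kernelPoly, ip_sum_right hc, eval_finsetSum]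
  refine Finset.sum_congr rfl fun j hj => ?_
  rw [ip_C_mul_right, ip_sum_left hc, eval_mul, eval_C]
  congr 1
  simp only [ip_C_mul_left, hip, Complex.conj_conj, mul_ite, mul_one, mul_zero,
    Finset.sum_ite_eq', hj, if_true]

lemma degree_kernelPoly_lt (hON : OrthonormalPolys μ p κ) (x : ℂ) (n : ℕ) :
    (kernelPoly p x n).degree < n := by
  rw [← mem_degreeLT]
  refine Submodule.sum_mem _ fun j hj => ?_
  rw [← smul_eq_C_mul]
  refine Submodule.smul_mem _ _ (mem_degreeLT.2 ?_)
  rw [hON.1]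
  exact_mod_cast Finset.mem_range.1 hj

lemma eval_kernelPoly (p : ℕ → ℂ[X]) (x : ℂ) (n : ℕ) :
    (kernelPoly p x n).eval x = ((∑ j ∈ Finset.range n, ‖(p j).eval x‖ ^ 2 : ℝ) : ℂ) := by
  rw [kernelPoly, eval_finsetSum]
  push_cast
  refine Finset.sum_congr rfl fun j _ => ?_
  rw [eval_mul, eval_C, Complex.conj_mul']

lemma integral_kernelPoly [IsFiniteMeasure μ]
    (hc : IsCompact (measSupport μ)) (hON : OrthonormalPolys μ p κ) (x : ℂ)
    (n : ℕ) : ∫ z, ‖(kernelPoly p x n).eval z‖ ^ 2 ∂μ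
      = ∑ j ∈ Finset.range n, ‖(p j).eval x‖ ^ 2 := by
  have h := ip_kernelPoly hc hON x n _ (degree_kernelPoly_lt hON x n)
  rw [ip_self, eval_kernelPoly] at h
  exact_mod_cast h

/-- The first moment of `|K_{n-1}(z, x)|² dμ` about `x` only involves the single polynomial `p n`,
because `(z - x) K_{n-1}(z, x)` is orthogonal to `K_n(z, x)`. -/
lemma ip_kernelPoly_mul [IsFiniteMeasure μ]
    (hc : IsCompact (measSupport μ)) (hON : OrthonormalPolys μ p κ) (x : ℂ)
    (n : ℕ) : ip μ (kernelPoly p x n) ((X - C x) * kernelPoly p x n)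
      = -((p n).eval x * ip μ (p n) ((X - C x) * kernelPoly p x n)) := by
  have hdeg : ((X - C x) * kernelPoly p x n).degree < ((n + 1 : ℕ) : WithBot ℕ) := by
    have h := degree_kernelPoly_lt hON x n
    rw [degree_mul, degree_X_sub_C]
    rcases eq_or_ne (kernelPoly p x n) 0 with h0 | h0
    · rw [h0, degree_zero, WithBot.add_bot]
      exact WithBot.bot_lt_coe _
    · rw [degree_eq_natDegree h0] at h ⊢
      have : (kernelPoly p x n).natDegree < n := by exact_mod_cast h
      have h' : 1 + (kernelPoly p x n).natDegree < n + 1 := by omega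
      exact_mod_cast h'
  have h := ip_kernelPoly hc hON x (n + 1) _ hdeg
  have hs : kernelPoly p x (n + 1)
      = kernelPoly p x n + C ((starRingEnd ℂ) ((p n).eval x)) * p n := by
    rw [kernelPoly, Finset.sum_range_succ, kernelPoly]
  rw [hs, ip_add_left hc, ip_C_mul_left, Complex.conj_conj] at h
  simp only [eval_mul, eval_sub, eval_X, eval_C, sub_self, zero_mul] at h
  exact eq_neg_of_add_eq_zero_left h

lemma norm_ip_le [IsFiniteMeasure μ]
    (hc : IsCompact (measSupport μ)) (hON : OrthonormalPolys μ p κ) (x : ℂ) {B : ℝ}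
    (hB : ∀ z ∈ measSupport μ, ‖z - x‖ ≤ B) (hB0 : 0 ≤ B) (n : ℕ) {s : ℝ} (hs : 0 < s)
    (hsK : s ^ 2 = ∑ j ∈ Finset.range n, ‖(p j).eval x‖ ^ 2) :
    ‖ip μ (p n) ((X - C x) * kernelPoly p x n)‖ ≤ B * s := by
  set F := kernelPoly p x n with hF
  have hp1 : ∫ z, ‖(p n).eval z‖ ^ 2 ∂μ = 1 := by
    have h : ip μ (p n) (p n) = 1 := (hON.2.2.2 n n).trans (if_pos rfl)
    rw [ip_self] at h
    exact_mod_cast h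
  have hF1 : ∫ z, ‖F.eval z‖ ^ 2 ∂μ = s ^ 2 := by
    rw [hsK]; exact integral_kernelPoly hc hON x n
  have hi1 : Integrable (fun z => ‖(p n).eval z‖ ^ 2) μ :=
    integrable_of_continuous hc ((p n).continuous.norm.pow 2)
  have hi2 : Integrable (fun z => ‖F.eval z‖ ^ 2) μ :=
    integrable_of_continuous hc (F.continuous.norm.pow 2)
  -- Weighted AM-GM, with weight `s = ‖F‖`, plays the role of the Cauchy–Schwarz inequality.
  calc ‖ip μ (p n) ((X - C x) * F)‖
      ≤ ∫ z, (B * s / 2 * ‖(p n).eval z‖ ^ 2 + B / (2 * s) * ‖F.eval z‖ ^ 2) ∂μ := by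
        refine norm_integral_le_of_norm_le ((hi1.const_mul _).add (hi2.const_mul _)) ?_
        filter_upwards [ae_mem_measSupport μ] with z hz
        rw [norm_mul, RCLike.norm_conj, eval_mul, norm_mul]
        simp only [eval_sub, eval_X, eval_C]
        have h1 : ‖(p n).eval z‖ * ‖F.eval z‖
            ≤ s / 2 * ‖(p n).eval z‖ ^ 2 + 1 / (2 * s) * ‖F.eval z‖ ^ 2 := by
          have h0 : 0 ≤ (s * ‖(p n).eval z‖ - ‖F.eval z‖) ^ 2 / (2 * s) := by positivity
          have he : (s * ‖(p n).eval z‖ - ‖F.eval z‖) ^ 2 / (2 * s)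
              = s / 2 * ‖(p n).eval z‖ ^ 2 + 1 / (2 * s) * ‖F.eval z‖ ^ 2
                - ‖(p n).eval z‖ * ‖F.eval z‖ := by
            field_simp
            ring
          linarith
        calc ‖(p n).eval z‖ * (‖z - x‖ * ‖F.eval z‖)
            = ‖z - x‖ * (‖(p n).eval z‖ * ‖F.eval z‖) := by ring
          _ ≤ B * (s / 2 * ‖(p n).eval z‖ ^ 2 + 1 / (2 * s) * ‖F.eval z‖ ^ 2) :=
              mul_le_mul (hB z hz) h1 (by positivity) hB0
          _ = _ := by ring
    _ = B * s := by
        rw [integral_add (hi1.const_mul _) (hi2.const_mul _), integral_const_mul,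
          integral_const_mul, hp1, hF1]
        field_simp
        ring

/-- A real functional that is at least `δ` on `supp μ - x` forces the first moment of
`|K_{n-1}(z, x)|² dμ` about `x` to be large. -/
lemma le_norm_ip [IsFiniteMeasure μ]
    (hc : IsCompact (measSupport μ)) (hON : OrthonormalPolys μ p κ) (x : ℂ) {δ : ℝ}
    (f : ℂ →L[ℝ] ℝ) (hf : ∀ z ∈ measSupport μ, δ ≤ f (z - x)) (n : ℕ) :
    δ * ∑ j ∈ Finset.range n, ‖(p j).eval x‖ ^ 2
      ≤ ‖f‖ * ‖ip μ (kernelPoly p x n) ((X - C x) * kernelPoly p x n)‖ := by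
  rw [← integral_kernelPoly hc hON x n]
  set F := kernelPoly p x n
  have hi := integrable_ip hc F ((X - C x) * F)
  have hpt : ∀ z, f ((starRingEnd ℂ) (F.eval z) * ((X - C x) * F).eval z)
      = ‖F.eval z‖ ^ 2 * f (z - x) := by
    intro z
    have : (starRingEnd ℂ) (F.eval z) * ((X - C x) * F).eval z
        = (‖F.eval z‖ ^ 2 : ℝ) • (z - x) := by
      simp only [eval_mul, eval_sub, eval_X, eval_C, Complex.real_smul]
      push_cast
      rw [← Complex.conj_mul']
      ring
    rw [this, map_smul, smul_eq_mul]
  calc δ * ∫ z, ‖F.eval z‖ ^ 2 ∂μ = ∫ z, δ * ‖F.eval z‖ ^ 2 ∂μ := (integral_const_mul _ _).symm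
    _ ≤ ∫ z, f ((starRingEnd ℂ) (F.eval z) * ((X - C x) * F).eval z) ∂μ := by
        refine integral_mono_ae
          ((integrable_of_continuous hc (F.continuous.norm.pow 2)).const_mul _)
          (f.integrable_comp hi) ?_
        filter_upwards [ae_mem_measSupport μ] with z hz
        rw [hpt, mul_comm]
        exact mul_le_mul_of_nonneg_left (hf z hz) (by positivity)
    _ = f (ip μ F ((X - C x) * F)) := f.integral_comp_comm hi
    _ ≤ ‖f‖ * ‖ip μ F ((X - C x) * F)‖ := (le_abs_self _).trans (f.le_opNorm _)

end kernel

/-! ### Convex hulls and separation -/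

/-- By Carathéodory's theorem, the convex hull of `s` in the plane is the union, over `m ≤ 3`, of
the continuous images of `stdSimplex ℝ (Fin m) × sᵐ` under taking convex combinations. -/
lemma isCompact_convexHull_complex_s18 {s : Set ℂ} (hs : IsCompact s) :
    IsCompact (convexHull ℝ s) := by
  have key : convexHull ℝ s = ⋃ m ∈ Finset.range 4,
      (fun q : (Fin m → ℝ) × (Fin m → ℂ) => ∑ i, q.1 i • q.2 i) ''
        (stdSimplex ℝ (Fin m) ×ˢ Set.univ.pi fun _ => s) := by
    refine Set.Subset.antisymm (fun y hy => ?_) (Set.iUnion₂_subset fun m _ => ?_)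
    · obtain ⟨ι, _, z, w, hzs, hai, hw0, hw1, rfl⟩ := eq_pos_convex_span_of_mem_convexHull hy
      have hcard : Fintype.card ι ≤ 3 := by
        have h := hai.card_le_finrank_succ
        have h' := Submodule.finrank_le (vectorSpan ℝ (Set.range z))
        rw [Complex.finrank_real_complex] at h'
        omega
      let e := Fintype.equivFin ι
      refine Set.mem_iUnion₂.2 ⟨Fintype.card ι, Finset.mem_range.2 (by omega),
        (w ∘ e.symm, z ∘ e.symm), ⟨⟨fun i => (hw0 _).le, ?_⟩, fun i _ => hzs ⟨_, rfl⟩⟩, ?_⟩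
      · exact (e.symm.sum_comp w).trans hw1
      · exact e.symm.sum_comp fun i => w i • z i
    · rintro _ ⟨⟨w, z⟩, ⟨hw, hz⟩, rfl⟩
      exact (convex_convexHull ℝ s).sum_mem (fun i _ => hw.1 i) hw.2
        fun i _ => subset_convexHull ℝ s (hz i trivial)
  rw [key]
  refine (Finset.range 4).isCompact_biUnion fun m _ => ?_
  exact ((isCompact_stdSimplex ℝ (Fin m)).prod (isCompact_univ_pi fun _ => hs)).image
    (by fun_prop)

theorem no_christoffel_decay_outside_convex_hull
    (μ : Measure ℂ) [IsFiniteMeasure μ]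
    (hc : IsCompact (measSupport μ)) (hi : (measSupport μ).Infinite)
    (p : ℕ → Polynomial ℂ) (κ : ℕ → ℝ) (hON : OrthonormalPolys μ p κ)
    (x : ℂ) (hx : x ∉ convexHull ℝ (measSupport μ)) :
    ¬ Tendsto
        (fun n => ‖(p n).eval x‖ ^ 2 / ∑ j ∈ Finset.range n, ‖(p j).eval x‖ ^ 2)
        atTop (𝓝 0) := by
  intro hT
  obtain ⟨f, u, hfx, hfu⟩ := geometric_hahn_banach_point_closed
    (convex_convexHull ℝ (measSupport μ)) (isCompact_convexHull_complex_s18 hc).isClosed hx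
  set δ : ℝ := u - f x with hδ
  have hδ0 : 0 < δ := sub_pos.2 hfx
  have hf : ∀ z ∈ measSupport μ, δ ≤ f (z - x) := fun z hz => by
    have := hfu z (subset_convexHull ℝ _ hz)
    rw [map_sub]
    linarith
  obtain ⟨B, hB⟩ : ∃ B, ∀ z ∈ measSupport μ, ‖z - x‖ ≤ B :=
    hc.exists_bound_of_continuousOn (continuous_id.sub continuous_const).continuousOn
  obtain ⟨z₀, hz₀⟩ := hi.nonempty
  have hB0 : 0 ≤ B := (norm_nonneg _).trans (hB z₀ hz₀)
  have hp0 : (p 0).eval x ≠ 0 := by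
    have h := hON.1 0
    rw [eq_C_of_degree_eq_zero h, eval_C]
    exact coeff_ne_zero_of_eq_degree h
  have hlow : ∀ n ≥ 1, δ ^ 2 ≤ (‖f‖ * B) ^ 2 *
      (‖(p n).eval x‖ ^ 2 / ∑ j ∈ Finset.range n, ‖(p j).eval x‖ ^ 2) := by
    intro n hn
    set K := ∑ j ∈ Finset.range n, ‖(p j).eval x‖ ^ 2 with hK
    have hK0 : 0 < K :=
      lt_of_lt_of_le (by positivity : 0 < ‖(p 0).eval x‖ ^ 2)
        (Finset.single_le_sum (f := fun j => ‖(p j).eval x‖ ^ 2) (fun j _ => by positivity)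
          (Finset.mem_range.2 hn))
    have hs := Real.sqrt_pos.2 hK0
    have hsK : √K ^ 2 = K := Real.sq_sqrt hK0.le
    have h1 := le_norm_ip hc hON x f hf n
    rw [ip_kernelPoly_mul hc hON x n, norm_neg, norm_mul, ← hK, ← hsK] at h1
    have h2 := norm_ip_le hc hON x hB hB0 n hs hsK
    have h3 : δ * √K ≤ ‖f‖ * B * ‖(p n).eval x‖ := by
      refine le_of_mul_le_mul_right ?_ hs
      calc δ * √K * √K = δ * √K ^ 2 := by ring
        _ ≤ ‖f‖ * (‖(p n).eval x‖ * ‖ip μ (p n) ((X - C x) * kernelPoly p x n)‖) := h1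
        _ ≤ ‖f‖ * (‖(p n).eval x‖ * (B * √K)) := by gcongr
        _ = _ := by ring
    have h4 := pow_le_pow_left₀ (by positivity) h3 2
    rw [mul_pow, hsK, mul_pow] at h4
    rw [← mul_div_assoc, le_div_iff₀ hK0]
    exact h4
  have hlim := hT.const_mul ((‖f‖ * B) ^ 2)
  rw [mul_zero] at hlim
  have := ge_of_tendsto hlim (eventually_atTop.2 ⟨1, hlow⟩)
  exact absurd this (not_le.2 (by positivity))
end
end
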